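/- Suppose f ≡ 0 on X, and c ∈ ℝ^m is a nonzero vector such that min_{x∈X} cᵀx < max_{x∈X} cᵀx (in particular X has at least two extreme points). Then for every selection x* of minimizers, the true loss function d ↦ L(d,c) = cᵀx*(d) − min_{x∈X} cᵀx is not a convex function on ℝ^m. -/

import Mathlib

open scoped RealInnerProductSpace

/-!
A convex function on a whole vector space that is bounded above is constant. The true loss is
bounded above as soon as `f` has bounded oscillation on `X`, so if it were convex it would take the
same value at all the directions `t • c`. For large `t`, however, the minimizers `xs (t • c)` and
`xs (-t • c)` nearly minimize and maximize `⟪c, ·⟫` over `X`, so that the loss differs between them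
unless the oscillation of `f` makes up for the whole variation of `⟪c, ·⟫` on `X`.
-/

theorem eq_of_convexOn_univ_of_bddAbove {𝕜 E : Type*} [Field 𝕜] [LinearOrder 𝕜]
    [IsStrictOrderedRing 𝕜] [AddCommGroup E] [Module 𝕜 E] {g : E → 𝕜}
    (hg : ConvexOn 𝕜 Set.univ g) (hbdd : BddAbove (Set.range g)) (x y : E) : g x = g y := by
  obtain ⟨M, hM⟩ := hbdd
  have hgM (z : E) : g z ≤ M := hM (Set.mem_range_self z)
  suffices hle : ∀ x y, g y ≤ g x from le_antisymm (hle y x) (hle x y)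
  intro x y
  by_contra! hlt
  -- On the ray from `x` through `y`, the value at parameter `s` is at least
  -- `g x + s * (g y - g x)`; this `s` makes that exceed `M`.
  set s := 1 + (M - g x) / (g y - g x) with hs
  have hslope : 0 < g y - g x := sub_pos.2 hlt
  have hs_one : 1 ≤ s :=
    le_add_of_nonneg_right (div_nonneg (sub_nonneg.2 (hgM x)) hslope.le)
  have hs_pos : 0 < s := one_pos.trans_le hs_one
  have hy : (1 - s⁻¹) • x + s⁻¹ • (x + s • (y - x)) = y := by
    rw [smul_add, inv_smul_smul₀ hs_pos.ne']
    module
  have hchord : g y ≤ (1 - s⁻¹) * g x + s⁻¹ * g (x + s • (y - x)) := by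
    simpa only [hy, smul_eq_mul] using hg.2 (Set.mem_univ x) (Set.mem_univ (x + s • (y - x)))
      (sub_nonneg.2 (inv_le_one_of_one_le₀ hs_one)) (inv_nonneg.2 hs_pos.le) (sub_add_cancel _ _)
  have hgrowth : s * (g y - g x) ≤ g (x + s • (y - x)) - g x := by
    rw [← le_inv_mul_iff₀ hs_pos]
    linarith
  have hs_mul : s * (g y - g x) = (g y - g x) + (M - g x) := by
    rw [hs, add_mul, one_mul, div_mul_cancel₀ _ hslope.ne']
  linarith [hgM (x + s • (y - x))]

theorem exists_lt_of_sInf_image_lt_sSup_image {α β : Type*} [ConditionallyCompleteLinearOrder β]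
    {s : Set α} {g : α → β} (hs : s.Nonempty) (h : sInf (g '' s) < sSup (g '' s)) :
    ∃ x ∈ s, ∃ y ∈ s, g x < g y := by
  obtain ⟨_, ⟨y, hy, rfl⟩, hlt⟩ := exists_lt_of_lt_csSup (hs.image g) h
  obtain ⟨_, ⟨x, hx, rfl⟩, hxy⟩ := exists_lt_of_csInf_lt (hs.image g) hlt
  exact ⟨x, hx, y, hy, hxy⟩

section TrueLoss

variable {E : Type*} [SeminormedAddCommGroup E] [InnerProductSpace ℝ E]

/-- The true loss `L(d, c)`: the excess of the objective `f + ⟪c, ·⟫` over its infimum on `X` when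
the decision `xs d` is taken for the predicted cost vector `d` while the actual one is `c`. -/
noncomputable def trueLoss (X : Set E) (f : E → ℝ) (xs : E → E) (c d : E) : ℝ :=
  f (xs d) + ⟪c, xs d⟫ - sInf ((fun x => f x + ⟪c, x⟫) '' X)

variable {X : Set E} {f : E → ℝ} {xs : E → E} {c : E} {K : ℝ}

theorem mul_inner_sub_inner_le_of_isMinOn {t : ℝ} {x y : E}
    (hx : IsMinOn (fun z => f z + ⟪t • c, z⟫) X x) (hy : y ∈ X) :
    t * (⟪c, x⟫ - ⟪c, y⟫) ≤ f y - f x := by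
  have hmin := isMinOn_iff.1 hx y hy
  simp only [real_inner_smul_left] at hmin
  linarith

theorem bddAbove_range_trueLoss (hK : ∀ x ∈ X, ∀ y ∈ X, f x - f y ≤ K) (hmem : ∀ d, xs d ∈ X)
    (hmin : ∀ d, IsMinOn (fun x => f x + ⟪d, x⟫) X (xs d)) :
    BddAbove (Set.range (trueLoss X f xs c)) := by
  refine ⟨trueLoss X f xs c ((-1 : ℝ) • c) + 2 * K, ?_⟩
  rintro _ ⟨d, rfl⟩
  have hinner := mul_inner_sub_inner_le_of_isMinOn (hmin ((-1 : ℝ) • c)) (hmem d)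
  have hosc := hK (xs d) (hmem d) (xs ((-1 : ℝ) • c)) (hmem _)
  simp only [trueLoss]
  linarith

theorem statement0_general (hK : ∀ x ∈ X, ∀ y ∈ X, f x - f y ≤ K) (hmem : ∀ d, xs d ∈ X)
    (hmin : ∀ d, IsMinOn (fun x => f x + ⟪d, x⟫) X (xs d))
    {p q : E} (hp : p ∈ X) (hq : q ∈ X) (hgap : K < ⟪c, p⟫ - ⟪c, q⟫) :
    ¬ ConvexOn ℝ Set.univ (trueLoss X f xs c) := by
  intro hconv
  have hscaled (t : ℝ) (ht : 0 ≤ t) : t * (⟪c, p⟫ - ⟪c, q⟫ - K) ≤ 2 * K := by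
    have hlow := mul_inner_sub_inner_le_of_isMinOn (hmin (t • c)) hq
    have hhigh := mul_inner_sub_inner_le_of_isMinOn (hmin (-t • c)) hp
    have hconst := eq_of_convexOn_univ_of_bddAbove hconv
      (bddAbove_range_trueLoss hK hmem hmin) (t • c) (-t • c)
    have hgap_le : ⟪c, xs (-t • c)⟫ - ⟪c, xs (t • c)⟫ ≤ K := by
      have hosc := hK _ (hmem (t • c)) _ (hmem (-t • c))
      simp only [trueLoss] at hconst
      linarith
    linarith [mul_le_mul_of_nonneg_left hgap_le ht, hK q hq _ (hmem (t • c)),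
      hK p hp _ (hmem (-t • c))]
  have hK_nonneg : 0 ≤ K := by simpa only [sub_self] using hK p hp p hp
  have hgap_pos : 0 < ⟪c, p⟫ - ⟪c, q⟫ - K := sub_pos.2 hgap
  have hcontra := hscaled ((2 * K + 1) / (⟪c, p⟫ - ⟪c, q⟫ - K)) (by positivity)
  rw [div_mul_cancel₀ _ hgap_pos.ne'] at hcontra
  linarith

end TrueLoss

/-- With `f ≡ 0` on `X`, a nonzero `c` with a genuine gap between the
minimum and maximum of `x ↦ ⟪c, x⟫` over `X`, the true loss `d ↦ L(d,c)` is not convex,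
for every selection `xs` of minimizers. -/
theorem statement0 {m : ℕ} (X : Set (EuclideanSpace ℝ (Fin m)))
    (hXne : X.Nonempty) (hXconv : Convex ℝ X) (hXcomp : IsCompact X)
    (f : EuclideanSpace ℝ (Fin m) → ℝ)
    (hfconv : ConvexOn ℝ X f) (hfcont : ContinuousOn f X)
    (hf0 : ∀ x ∈ X, f x = 0)
    (xs : EuclideanSpace ℝ (Fin m) → EuclideanSpace ℝ (Fin m))
    (hxsmem : ∀ d, xs d ∈ X)
    (hxsmin : ∀ d, ∀ x ∈ X, f (xs d) + ⟪d, xs d⟫ ≤ f x + ⟪d, x⟫)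
    (c : EuclideanSpace ℝ (Fin m)) (hc : c ≠ 0)
    (hgap : sInf ((fun x => ⟪c, x⟫) '' X) < sSup ((fun x => ⟪c, x⟫) '' X)) :
    ¬ ConvexOn ℝ Set.univ
      (fun d => f (xs d) + ⟪c, xs d⟫ - sInf ((fun x => f x + ⟪c, x⟫) '' X)) := by
  obtain ⟨q, hq, p, hp, hlt⟩ := exists_lt_of_sInf_image_lt_sSup_image hXne hgap
  exact statement0_general (K := 0) (fun x hx y hy => by rw [hf0 x hx, hf0 y hy, sub_self]) hxsmem
    (fun d => isMinOn_iff.2 (hxsmin d)) hp hq (sub_pos.2 hlt)
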